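/- Fix d ≥ 2 and e ≥ 0. Define groups Σ₋₁ = Equiv.Perm (Fin d) and, recursively for 0 ≤ i ≤ e, Σ_i = (Fin (d−1) → Σ_{i−1}) ⋊ Equiv.Perm (Fin (d−1)) (the permutational wreath product of Σ_{i−1} with Equiv.Perm (Fin (d−1))). Let F = Σ₋₁ * Σ₀ * ⋯ * Σ_e be the free product. Then there exists a unique group homomorphism φ : F → F ≀ d such that: for σ ∈ Σ₋₁, φ(σ) = ⟨1, …, 1⟩σ; and for 0 ≤ i ≤ e and g = ⟨f₁, …, f_{d−1}⟩τ ∈ Σ_i (with f_j ∈ Σ_{i−1} and τ ∈ Equiv.Perm (Fin (d−1))), φ(g) = ⟨f₁, …, f_{d−1}, g⟩τ̂, where the j-th entry for j < d is f_j ∈ Σ_{i−1} ⊆ F, the last entry is g ∈ Σ_i ⊆ F, and τ̂ ∈ Equiv.Perm (Fin d) is τ extended by fixing the last point. -/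

import Mathlib

/-- The natural action of `Equiv.Perm (Fin d)` on `Fin d → G`, `(σ • f) i = f (σ⁻¹ i)`. -/
def permAut (G : Type*) [Group G] (d : ℕ) :
    Equiv.Perm (Fin d) →* MulAut (Fin d → G) where
  toFun σ :=
    { toFun := fun f i => f (σ⁻¹ i)
      invFun := fun f i => f (σ i)
      left_inv := fun f => funext fun i => by simp
      right_inv := fun f => funext fun i => by simp
      map_mul' := fun f g => rfl }
  map_one' := by
    ext f i
    simp
  map_mul' := fun σ τ => by
    ext f i
    simp [mul_inv_rev]

/-- The permutational wreath product `G ≀ d = (Fin d → G) ⋊ Equiv.Perm (Fin d)`. -/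
abbrev Wr (G : Type*) [Group G] (d : ℕ) :=
  (Fin d → G) ⋊[permAut G d] Equiv.Perm (Fin d)

/-- The groups `Σ₋₁ = Equiv.Perm (Fin (m+1))` and `Σ_i = (Fin m → Σ_{i-1}) ⋊ Equiv.Perm (Fin m)`
(with `d = m + 1`), bundled with their group structures; `SigG m i` is the paper's `Σ_{i-1}`. -/
def SigG (m : ℕ) : ℕ → ((T : Type) × Group T)
  | 0 => ⟨Equiv.Perm (Fin (m+1)), inferInstance⟩
  | i+1 =>
    letI := (SigG m i).2
    ⟨Wr (SigG m i).1 m, inferInstance⟩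

/-- The underlying type of `Σ_{i-1}`. -/
abbrev Sig (m i : ℕ) : Type := (SigG m i).1

instance sigGroup (m i : ℕ) : Group (Sig m i) := (SigG m i).2

/-- The free product `F = Σ₋₁ * Σ₀ * ⋯ * Σ_e`. -/
abbrev PolF (m e : ℕ) : Type := Monoid.CoprodI (fun j : Fin (e+2) => Sig m j)

/-- Extension of a permutation by fixing the last point. -/
def hatPerm (m : ℕ) : Equiv.Perm (Fin m) →* Equiv.Perm (Fin (m+1)) where
  toFun τ :=
    { toFun := fun x => Fin.lastCases (motive := fun _ => Fin (m+1)) (Fin.last m)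
        (fun j => (τ j).castSucc) x
      invFun := fun x => Fin.lastCases (motive := fun _ => Fin (m+1)) (Fin.last m)
        (fun j => (τ⁻¹ j).castSucc) x
      left_inv := fun x => by
        induction x using Fin.lastCases <;> simp
      right_inv := fun x => by
        induction x using Fin.lastCases <;> simp }
  map_one' := by
    ext x
    induction x using Fin.lastCases <;> simp
  map_mul' := fun σ τ => by
    ext x
    induction x using Fin.lastCases <;> simp

theorem hatPerm_castSucc (m : ℕ) (τ : Equiv.Perm (Fin m)) (j : Fin m) :
    hatPerm m τ j.castSucc = (τ j).castSucc := by
  simp [hatPerm]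

theorem hatPerm_last (m : ℕ) (τ : Equiv.Perm (Fin m)) :
    hatPerm m τ (Fin.last m) = Fin.last m := by
  simp [hatPerm]

theorem permAut_apply (G : Type*) [Group G] (d : ℕ) (σ : Equiv.Perm (Fin d)) (f : Fin d → G)
    (i : Fin d) : permAut G d σ f i = f (σ⁻¹ i) := rfl

/-- The recursion step `⟨f₁,…,f_m⟩τ ↦ ⟨α f₁,…,α f_m, β g⟩τ̂`. -/
def extHom {A K : Type*} [Group A] [Group K] (m : ℕ) (α : A →* K) (β : Wr A m →* K) :
    Wr A m →* Wr K (m+1) where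
  toFun g := ⟨fun x => Fin.lastCases (motive := fun _ => K) (β g) (fun j => α (g.left j)) x,
    hatPerm m g.right⟩
  map_one' := by
    ext x
    · induction x using Fin.lastCases <;> simp
    · simp
  map_mul' := fun g h => by
    apply SemidirectProduct.ext
    · funext x
      simp only [SemidirectProduct.mul_left, Pi.mul_apply, permAut_apply, ← map_inv]
      induction x using Fin.lastCases with
      | last => simp only [hatPerm_last, Fin.lastCases_last, map_mul]
      | cast j => simp only [hatPerm_castSucc, Fin.lastCases_castSucc, map_mul]
    · simp

/-- The components of the self-similarity homomorphism. -/
def compHom (m e : ℕ) : (i : ℕ) → (hi : i < e + 2) → (Sig m i →* Wr (PolF m e) (m+1))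
  | 0, _ => (SemidirectProduct.inr : Equiv.Perm (Fin (m+1)) →* Wr (PolF m e) (m+1))
  | i+1, hi => extHom m
      (Monoid.CoprodI.of (M := fun j : Fin (e+2) => Sig m j) (i := ⟨i, by omega⟩))
      (Monoid.CoprodI.of (M := fun j : Fin (e+2) => Sig m j) (i := ⟨i+1, hi⟩))

/-- The self-similarity structure of the group `P(d, e)` of polynomial activity growth,
`d = m + 1 ≥ 2`: there is a unique homomorphism `φ : F → F ≀ d`,
`F = Σ₋₁ * Σ₀ * ⋯ * Σ_e`, such that `φ(σ) = ⟨1,…,1⟩σ` for `σ ∈ Σ₋₁` and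
`φ(g) = ⟨f₁,…,f_{d-1},g⟩τ̂` for `g = ⟨f₁,…,f_{d-1}⟩τ ∈ Σ_i`, `0 ≤ i ≤ e`, where `τ̂`
is `τ` extended by fixing the last point. -/
theorem polynomial_activity_selfsimilarity_exists_unique
    (m e : ℕ) (hm : 1 ≤ m) :
    ∃! φ : PolF m e →* Wr (PolF m e) (m+1),
      (∀ σ : Sig m 0,
        ((φ (Monoid.CoprodI.of (i := (⟨0, by omega⟩ : Fin (e+2))) σ)).left = fun _ => 1) ∧
        (φ (Monoid.CoprodI.of (i := (⟨0, by omega⟩ : Fin (e+2))) σ)).right =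
          (σ : Equiv.Perm (Fin (m+1)))) ∧
      (∀ (i : ℕ) (hi : i ≤ e) (g : Sig m (i+1)),
        (∀ j : Fin m,
          (φ (Monoid.CoprodI.of (i := (⟨i+1, by omega⟩ : Fin (e+2))) g)).left j.castSucc =
            Monoid.CoprodI.of (i := (⟨i, by omega⟩ : Fin (e+2)))
              ((show Wr (Sig m i) m from g).left j)) ∧
        ((φ (Monoid.CoprodI.of (i := (⟨i+1, by omega⟩ : Fin (e+2))) g)).left (Fin.last m) =
          Monoid.CoprodI.of (i := (⟨i+1, by omega⟩ : Fin (e+2))) g) ∧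
        (∀ j : Fin m,
          (φ (Monoid.CoprodI.of (i := (⟨i+1, by omega⟩ : Fin (e+2))) g)).right j.castSucc =
            ((show Wr (Sig m i) m from g).right j).castSucc) ∧
        ((φ (Monoid.CoprodI.of (i := (⟨i+1, by omega⟩ : Fin (e+2))) g)).right (Fin.last m) =
          Fin.last m)) := by
  refine ⟨Monoid.CoprodI.lift (fun j : Fin (e+2) => compHom m e j j.2), ⟨?_, ?_⟩, ?_⟩
  · intro σ
    rw [Monoid.CoprodI.lift_of]
    exact ⟨rfl, rfl⟩
  · intro i hi g
    rw [Monoid.CoprodI.lift_of]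
    refine ⟨fun j => ?_, ?_, fun j => ?_, ?_⟩
    · exact Fin.lastCases_castSucc (motive := fun _ => PolF m e) ..
    · exact Fin.lastCases_last (motive := fun _ => PolF m e) ..
    · exact hatPerm_castSucc ..
    · exact hatPerm_last ..
  · rintro ψ ⟨h0, h1⟩
    apply Monoid.CoprodI.ext_hom
    rintro ⟨i, hi⟩
    apply MonoidHom.ext
    intro g
    rw [MonoidHom.comp_apply, MonoidHom.comp_apply, Monoid.CoprodI.lift_of]
    cases i with
    | zero => exact SemidirectProduct.ext (h0 g).1 (h0 g).2
    | succ i =>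
      obtain ⟨a, b, c, d⟩ := h1 i (by omega) g
      apply SemidirectProduct.ext
      · funext x
        induction x using Fin.lastCases with
        | last => exact b.trans (Fin.lastCases_last (motive := fun _ => PolF m e) ..).symm
        | cast j =>
          refine (a j).trans (Eq.symm ?_)
          exact Fin.lastCases_castSucc (motive := fun _ => PolF m e) ..
      · apply Equiv.ext
        intro x
        induction x using Fin.lastCases with
        | last => exact d.trans (hatPerm_last ..).symm
        | cast j => exact (c j).trans (hatPerm_castSucc ..).symm
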